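/- arXiv:2403.06395 — 3 statements merged into one kernel-verified Lean document; each statement's English description precedes it below -/
import Mathlib

section
/- Let T : ℂ[t] → ℂ[t] be a linear operator on the vector space of polynomials with complex coefficients such that for every n ≥ 0 the polynomial T(t^n) has degree at most n. Then there exists a sequence of polynomials (p_k)_{k≥0} in ℂ[t] with deg p_k ≤ k for every k, such that for every polynomial w one has T(w) = Σ_{k≥0} p_k · w^{(k)}/k!, where w^{(k)} denotes the k-th derivative of w (the sum is finite, since w^{(k)} = 0 for k > deg w). -/
open Polynomial

/-!
Taylor's formula `w(Y) = ∑ₖ (w⁽ᵏ⁾(X) / k!) (Y - X)ᵏ` holds in `R[X][Y]`. Let `T` act on the powers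
of `Y` while the variable `X` is held fixed as a scalar, and put `Y = X` in the values of `T`. The
left side becomes `T w`, and `(Y - X)ᵏ` becomes a polynomial `pₖ` depending only on `T` and `k`.
Expanding `(Y - X)ᵏ` gives `pₖ = ∑ⱼ (k choose j) (-X)ᵏ⁻ʲ T(Xʲ)`, which bounds its degree.
-/

lemma hasseDeriv_map {R S : Type*} [Semiring R] [Semiring S] (f : R →+* S) (k : ℕ) (w : R[X]) :
    hasseDeriv k (w.map f) = (hasseDeriv k w).map f := by
  ext n
  simp only [hasseDeriv_coeff, coeff_map, map_mul, map_natCast]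

lemma inv_factorial_smul_iterate_derivative {K : Type*} [DivisionSemiring K] [CharZero K] (k : ℕ)
    (w : K[X]) :
    (k.factorial : K)⁻¹ • derivative^[k] w = hasseDeriv k w := by
  have factorial_ne_zero : (k.factorial : K) ≠ 0 := Nat.cast_ne_zero.mpr k.factorial_ne_zero
  rw [inv_smul_eq_iff₀ factorial_ne_zero, ← factorial_smul_hasseDeriv, LinearMap.smul_apply,
    Nat.cast_smul_eq_nsmul]

lemma map_C_eq_sum_hasseDeriv_smul_X_sub_C_X_pow {R : Type*} [CommRing R] (w : R[X]) :
    w.map C = ∑ k ∈ Finset.range (w.natDegree + 1), hasseDeriv k w • (X - C X : R[X][X]) ^ k := by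
  have natDegree_eq : (taylor X (w.map C)).natDegree = w.natDegree := by
    rw [natDegree_taylor, natDegree_map_eq_of_injective C_injective]
  have coeff_eq (k : ℕ) : (taylor X (w.map C)).coeff k = hasseDeriv k w := by
    rw [taylor_coeff, hasseDeriv_map, eval_map, eval₂_C_X]
  conv_lhs => rw [← sum_taylor_eq (w.map C) X]
  rw [sum_over_range _ fun _ => by rw [C_0, zero_mul], natDegree_eq]
  simp only [coeff_eq, smul_eq_C_mul]

section Operator

variable {R : Type*} [CommRing R] (T : R[X] →ₗ[R] R[X])

/-- The `R[X]`-linear extension of `T` to polynomials in a second variable: `c(X) Yʲ` is sent to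
`c(X) T(Xʲ)`. In `R[X][X]` the outer variable is `Y`, and `C X` is the scalar `X`. -/
noncomputable def diagonalExtension : R[X][X] →ₗ[R[X]] R[X] :=
  (basisMonomials R[X]).constr R[X] fun j => T (X ^ j)

/-- The coefficient of the `k`-th Hasse derivative in the expansion of `T` as a differential
operator of infinite order, namely the image of `(Y - X)ᵏ` under `diagonalExtension T`. -/
noncomputable def diffOpCoeff (k : ℕ) : R[X] :=
  diagonalExtension T ((X - C X) ^ k)

lemma diagonalExtension_X_pow (j : ℕ) : diagonalExtension T (X ^ j) = T (X ^ j) := by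
  simpa only [diagonalExtension, coe_basisMonomials, monomial_one_right_eq_X_pow] using
    (basisMonomials R[X]).constr_basis R[X] (fun j => T (X ^ j)) j

lemma diagonalExtension_map_C (w : R[X]) : diagonalExtension T (w.map C) = T w := by
  induction w using Polynomial.induction_on' with
  | add p q hp hq => rw [Polynomial.map_add, map_add, map_add, hp, hq]
  | monomial j a =>
    rw [map_monomial, ← smul_X_eq_monomial, ← smul_X_eq_monomial, map_smul, map_smul,
      diagonalExtension_X_pow, smul_eq_C_mul, smul_eq_mul]

theorem apply_eq_sum_diffOpCoeff_mul_hasseDeriv (w : R[X]) :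
    T w = ∑ k ∈ Finset.range (w.natDegree + 1), diffOpCoeff T k * hasseDeriv k w := by
  rw [← diagonalExtension_map_C, map_C_eq_sum_hasseDeriv_smul_X_sub_C_X_pow, map_sum]
  simp only [map_smul, smul_eq_mul, diffOpCoeff, mul_comm]

lemma diffOpCoeff_eq_sum (k : ℕ) :
    diffOpCoeff T k =
      ∑ j ∈ Finset.range (k + 1), ((-X) ^ (k - j) * (k.choose j : R[X])) * T (X ^ j) := by
  have binomial : (X - C X : R[X][X]) ^ k =
      ∑ j ∈ Finset.range (k + 1), ((-X) ^ (k - j) * (k.choose j : R[X])) • X ^ j := by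
    rw [sub_eq_add_neg, add_pow]
    refine Finset.sum_congr rfl fun j _ => ?_
    simp only [smul_eq_C_mul, C_mul, C_pow, C_neg, map_natCast]
    ring
  simp only [diffOpCoeff, binomial, map_sum, map_smul, diagonalExtension_X_pow, smul_eq_mul]

lemma natDegree_diffOpCoeff_le {d : ℕ} (hT : ∀ n, (T (X ^ n)).natDegree ≤ n + d) (k : ℕ) :
    (diffOpCoeff T k).natDegree ≤ k + d := by
  rw [diffOpCoeff_eq_sum]
  refine natDegree_sum_le_of_forall_le _ _ fun j hj => ?_
  have hjk : j ≤ k := Finset.mem_range_succ_iff.mp hj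
  have scalar_le : ((-X : R[X]) ^ (k - j) * (k.choose j : R[X])).natDegree ≤ k - j := by
    compute_degree
  calc _ ≤ (k - j) + (j + d) := natDegree_mul_le_of_le scalar_le (hT j)
    _ = k + d := by omega

theorem triangular_operator_is_differential_operator_general :
    ∃ p : ℕ → R[X],
      (∀ d, (∀ n, (T (X ^ n)).natDegree ≤ n + d) → ∀ k, (p k).natDegree ≤ k + d) ∧
      ∀ w, T w = ∑ k ∈ Finset.range (w.natDegree + 1), p k * hasseDeriv k w :=
  ⟨diffOpCoeff T, fun _ => natDegree_diffOpCoeff_le T, apply_eq_sum_diffOpCoeff_mul_hasseDeriv T⟩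

end Operator

/-- Every linear operator on `ℂ[t]` sending `t^n` to a polynomial of degree at most `n`
is a differential operator of (possibly) infinite order with polynomial coefficients
`p_k` of degree at most `k`:  `T w = Σ_k p_k · w^{(k)} / k!`. -/
theorem triangular_operator_is_differential_operator
    (T : Polynomial ℂ →ₗ[ℂ] Polynomial ℂ)
    (hT : ∀ n : ℕ, (T (X ^ n)).natDegree ≤ n) :
    ∃ p : ℕ → Polynomial ℂ, (∀ k, (p k).natDegree ≤ k) ∧
      ∀ w : Polynomial ℂ,
        T w = ∑ k ∈ Finset.range (w.natDegree + 1),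
          ((k.factorial : ℂ))⁻¹ • (p k * derivative^[k] w) := by
  obtain ⟨p, hp, hTp⟩ := triangular_operator_is_differential_operator_general T
  refine ⟨p, hp 0 hT, fun w => ?_⟩
  simp only [← mul_smul_comm, inv_factorial_smul_iterate_derivative, hTp w]
end

section
/- Let f_0, f_1, g_0, g_1 ∈ ℂ with g_1 ≠ 0, and let (u_n)_{n≥0} be a sequence of monic polynomials in ℂ[t] with deg u_n = n satisfying the second-order differential equation (g_0 + g_1 t)·u_n′(t) + ((f_0 + f_1 t)/2)·u_n″(t) = n·g_1·u_n(t) for every n ≥ 0. Then the sequence (u_n) satisfies the three-term recurrence relation: for every n ≥ 1, t·u_n(t) = u_{n+1}(t) − (g_0/g_1 + n·f_1/g_1)·u_n(t) + ( n·(f_1 g_0 − f_0 g_1)/(2 g_1²) + n(n−1)·f_1²/(4 g_1²) )·u_{n−1}(t). In particular (u_n) is an orthogonal polynomial sequence, and its Jacobi matrix is L = X − (g_0/g_1) I − (f_1/g_1) D X + ((f_1 g_0 − f_0 g_1)/(2 g_1²)) D + (f_1²/(4 g_1²)) D² X. -/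
open Polynomial

/-!
Write `B = g ∂ + φ ∂²` with `φ = f / 2`. Since `g` and `φ` are affine, the commutators of `B` with
`φ ∂` and with `g` close up, so that on the eigenspace of `B` for `c g₁` the operator
`g + φ ∂ + c φ₁` raises the eigenvalue by `g₁` and `c φ₁ - φ ∂` lowers it by `g₁`. Their sum is
multiplication by `g₁ X + g₀ + 2 c φ₁`. A nonzero eigenpolynomial for `n g₁` has degree `n`, so
the eigenspaces are at most one-dimensional, both images of `u n` are multiples of neighbouring
eigenpolynomials, and one coefficient identifies each multiple.
-/

section Ladder

open Module.End

variable {R : Type*} [CommRing R]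

/-- The second-order operator `g ∂ + φ ∂²` on polynomials, with affine drift `g = g₀ + g₁ t` and
affine diffusion coefficient `φ = φ₀ + φ₁ t`, whose eigenpolynomials are the `u n`. The factor
`1/2` of the paper is absorbed in `φ = f / 2`, so that the definition makes sense over any
commutative ring. -/
noncomputable def affineDiffOp (φ₀ φ₁ g₀ g₁ : R) : R[X] →ₗ[R] R[X] :=
  LinearMap.mulLeft R (C g₀ + C g₁ * X) ∘ₗ derivative +
    LinearMap.mulLeft R (C φ₀ + C φ₁ * X) ∘ₗ derivative ∘ₗ derivative

/-- The ladder operator `g + φ ∂ + c φ₁`, which maps the eigenspace of `affineDiffOp` for `c g₁`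
to the one for `(c + 1) g₁`. -/
noncomputable def raisingOp (φ₀ φ₁ g₀ g₁ c : R) (p : R[X]) : R[X] :=
  (C g₀ + C g₁ * X) * p + (C φ₀ + C φ₁ * X) * derivative p + C (c * φ₁) * p

/-- The ladder operator `c φ₁ - φ ∂`, which maps the eigenspace of `affineDiffOp` for `c g₁`
to the one for `(c - 1) g₁`. -/
noncomputable def loweringOp (φ₀ φ₁ c : R) (p : R[X]) : R[X] :=
  C (c * φ₁) * p - (C φ₀ + C φ₁ * X) * derivative p

variable {φ₀ φ₁ g₀ g₁ c : R} {p q r : R[X]} {n : ℕ}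

theorem affineDiffOp_apply (φ₀ φ₁ g₀ g₁ : R) (p : R[X]) :
    affineDiffOp φ₀ φ₁ g₀ g₁ p =
      (C g₀ + C g₁ * X) * derivative p + (C φ₀ + C φ₁ * X) * derivative (derivative p) :=
  rfl

theorem raisingOp_add_loweringOp (φ₀ φ₁ g₀ g₁ c : R) (p : R[X]) :
    raisingOp φ₀ φ₁ g₀ g₁ c p + loweringOp φ₀ φ₁ c p =
      g₁ • (X * p) + (g₀ + 2 * c * φ₁) • p := by
  simp only [raisingOp, loweringOp, smul_eq_C_mul, C_add, C_mul, map_ofNat]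
  ring

theorem affineDiffOp_diffusion_mul_derivative (φ₀ φ₁ g₀ g₁ : R) (p : R[X]) :
    affineDiffOp φ₀ φ₁ g₀ g₁ ((C φ₀ + C φ₁ * X) * derivative p) =
      (C φ₀ + C φ₁ * X) * derivative (affineDiffOp φ₀ φ₁ g₀ g₁ p) +
        C φ₁ * affineDiffOp φ₀ φ₁ g₀ g₁ p - C g₁ * ((C φ₀ + C φ₁ * X) * derivative p) := by
  simp only [affineDiffOp_apply, derivative_add, derivative_mul, derivative_C, derivative_X,
    derivative_zero, derivative_one]
  ring

theorem affineDiffOp_drift_mul (φ₀ φ₁ g₀ g₁ : R) (p : R[X]) :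
    affineDiffOp φ₀ φ₁ g₀ g₁ ((C g₀ + C g₁ * X) * p) =
      (C g₀ + C g₁ * X) * affineDiffOp φ₀ φ₁ g₀ g₁ p + C g₁ * ((C g₀ + C g₁ * X) * p) +
        2 * C g₁ * ((C φ₀ + C φ₁ * X) * derivative p) := by
  simp only [affineDiffOp_apply, derivative_add, derivative_mul, derivative_C, derivative_X,
    derivative_zero, derivative_one]
  ring

theorem affineDiffOp_C_mul (φ₀ φ₁ g₀ g₁ a : R) (p : R[X]) :
    affineDiffOp φ₀ φ₁ g₀ g₁ (C a * p) = C a * affineDiffOp φ₀ φ₁ g₀ g₁ p := by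
  simp only [← smul_eq_C_mul, map_smul]

theorem mem_eigenspace_affineDiffOp :
    p ∈ eigenspace (affineDiffOp φ₀ φ₁ g₀ g₁) c ↔ affineDiffOp φ₀ φ₁ g₀ g₁ p = C c * p := by
  rw [mem_eigenspace_iff, smul_eq_C_mul]

theorem raisingOp_mem_eigenspace (hp : p ∈ eigenspace (affineDiffOp φ₀ φ₁ g₀ g₁) (c * g₁)) :
    raisingOp φ₀ φ₁ g₀ g₁ c p ∈ eigenspace (affineDiffOp φ₀ φ₁ g₀ g₁) ((c + 1) * g₁) := by
  rw [mem_eigenspace_affineDiffOp] at hp ⊢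
  rw [raisingOp, map_add, map_add, affineDiffOp_drift_mul, affineDiffOp_diffusion_mul_derivative,
    affineDiffOp_C_mul, hp, derivative_C_mul]
  simp only [C_add, C_mul, C_1]
  ring

theorem loweringOp_mem_eigenspace (hp : p ∈ eigenspace (affineDiffOp φ₀ φ₁ g₀ g₁) (c * g₁)) :
    loweringOp φ₀ φ₁ c p ∈ eigenspace (affineDiffOp φ₀ φ₁ g₀ g₁) ((c - 1) * g₁) := by
  rw [mem_eigenspace_affineDiffOp] at hp ⊢
  rw [loweringOp, map_sub, affineDiffOp_diffusion_mul_derivative, affineDiffOp_C_mul, hp,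
    derivative_C_mul]
  simp only [C_sub, C_mul, C_1]
  ring

theorem coeff_affine_mul_derivative (a b : R) (p : R[X]) (k : ℕ) :
    ((C a + C b * X) * derivative p).coeff k =
      a * (k + 1) * p.coeff (k + 1) + b * k * p.coeff k := by
  cases k <;>
  · simp only [add_mul, mul_assoc, coeff_add, coeff_C_mul, coeff_X_mul_zero, coeff_X_mul,
      coeff_derivative]
    push_cast
    ring

theorem coeff_affineDiffOp (φ₀ φ₁ g₀ g₁ : R) (p : R[X]) (k : ℕ) :
    (affineDiffOp φ₀ φ₁ g₀ g₁ p).coeff k =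
      k * g₁ * p.coeff k + (k + 1) * (g₀ + k * φ₁) * p.coeff (k + 1) +
        (k + 1) * (k + 2) * φ₀ * p.coeff (k + 2) := by
  rw [affineDiffOp_apply, coeff_add, coeff_affine_mul_derivative, coeff_affine_mul_derivative,
    coeff_derivative, coeff_derivative]
  push_cast
  ring

theorem coeff_raisingOp_natDegree_succ (φ₀ φ₁ g₀ g₁ c : R) (p : R[X]) :
    (raisingOp φ₀ φ₁ g₀ g₁ c p).coeff (p.natDegree + 1) = g₁ * p.leadingCoeff := by
  have hcoeff : p.coeff (p.natDegree + 1) = 0 := coeff_eq_zero_of_natDegree_lt (by lia)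
  have hcoeff' : p.coeff (p.natDegree + 1 + 1) = 0 := coeff_eq_zero_of_natDegree_lt (by lia)
  rw [raisingOp, coeff_add, coeff_add, coeff_affine_mul_derivative, coeff_C_mul, add_mul,
    coeff_add, coeff_C_mul, mul_assoc, coeff_C_mul, coeff_X_mul, hcoeff, hcoeff', coeff_natDegree]
  ring

theorem coeff_loweringOp (φ₀ φ₁ c : R) (p : R[X]) (k : ℕ) :
    (loweringOp φ₀ φ₁ c p).coeff k =
      (c - k) * φ₁ * p.coeff k - (k + 1) * φ₀ * p.coeff (k + 1) := by
  rw [loweringOp, coeff_sub, coeff_affine_mul_derivative, coeff_C_mul]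
  ring

section Domain

variable [IsDomain R] [CharZero R]

theorem natDegree_eq_of_mem_eigenspace_affineDiffOp (hg₁ : g₁ ≠ 0)
    (hp : p ∈ eigenspace (affineDiffOp φ₀ φ₁ g₀ g₁) (n * g₁)) (hp₀ : p ≠ 0) :
    p.natDegree = n := by
  have hcoeff := congrArg (coeff · p.natDegree) (mem_eigenspace_affineDiffOp.1 hp)
  simp only [coeff_affineDiffOp, coeff_C_mul, coeff_natDegree,
    coeff_eq_zero_of_natDegree_lt (show p.natDegree < p.natDegree + 1 by lia),
    coeff_eq_zero_of_natDegree_lt (show p.natDegree < p.natDegree + 2 by lia),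
    mul_zero, add_zero] at hcoeff
  exact Nat.cast_injective
    (mul_right_cancel₀ hg₁ (mul_right_cancel₀ (leadingCoeff_ne_zero.2 hp₀) hcoeff))

theorem coeff_eq_one_of_mem_eigenspace_affineDiffOp (hg₁ : g₁ ≠ 0)
    (hp : p ∈ eigenspace (affineDiffOp φ₀ φ₁ g₀ g₁) (n * g₁)) (hp_monic : p.Monic) :
    p.coeff n = 1 := by
  rw [← natDegree_eq_of_mem_eigenspace_affineDiffOp hg₁ hp hp_monic.ne_zero,
    hp_monic.coeff_natDegree]

theorem eq_coeff_smul_of_mem_eigenspace_affineDiffOp (hg₁ : g₁ ≠ 0)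
    (hp : p ∈ eigenspace (affineDiffOp φ₀ φ₁ g₀ g₁) (n * g₁))
    (hq : q ∈ eigenspace (affineDiffOp φ₀ φ₁ g₀ g₁) (n * g₁)) (hq_monic : q.Monic) :
    p = p.coeff n • q := by
  by_contra hne
  have hsub₀ := sub_ne_zero.2 hne
  have hdeg := natDegree_eq_of_mem_eigenspace_affineDiffOp hg₁
    (sub_mem hp (Submodule.smul_mem _ (p.coeff n) hq)) hsub₀
  apply leadingCoeff_ne_zero.2 hsub₀
  rw [leadingCoeff, hdeg, coeff_sub, coeff_smul,
    coeff_eq_one_of_mem_eigenspace_affineDiffOp hg₁ hq hq_monic, smul_eq_mul, mul_one, sub_self]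

theorem mul_coeff_of_mem_eigenspace_affineDiffOp_succ (hg₁ : g₁ ≠ 0)
    (hp : p ∈ eigenspace (affineDiffOp φ₀ φ₁ g₀ g₁) ((n + 1 : ℕ) * g₁)) (hp_monic : p.Monic) :
    g₁ * p.coeff n = (n + 1) * (g₀ + n * φ₁) := by
  have hdeg := natDegree_eq_of_mem_eigenspace_affineDiffOp hg₁ hp hp_monic.ne_zero
  have hlead := coeff_eq_one_of_mem_eigenspace_affineDiffOp hg₁ hp hp_monic
  have hcoeff := congrArg (coeff · n) (mem_eigenspace_affineDiffOp.1 hp)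
  simp only [coeff_affineDiffOp, coeff_C_mul, hlead,
    coeff_eq_zero_of_natDegree_lt (show p.natDegree < n + 2 by lia)] at hcoeff
  push_cast at hcoeff
  linear_combination -hcoeff

theorem raisingOp_eq_smul (hg₁ : g₁ ≠ 0)
    (hp : p ∈ eigenspace (affineDiffOp φ₀ φ₁ g₀ g₁) (n * g₁)) (hp_monic : p.Monic)
    (hq : q ∈ eigenspace (affineDiffOp φ₀ φ₁ g₀ g₁) ((n + 1 : ℕ) * g₁)) (hq_monic : q.Monic) :
    raisingOp φ₀ φ₁ g₀ g₁ n p = g₁ • q := by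
  have hraise := raisingOp_mem_eigenspace hp
  rw [← Nat.cast_succ] at hraise
  have hdeg := natDegree_eq_of_mem_eigenspace_affineDiffOp hg₁ hp hp_monic.ne_zero
  have hcoeff : (raisingOp φ₀ φ₁ g₀ g₁ n p).coeff (n + 1) = g₁ := by
    simpa [hdeg, hp_monic.leadingCoeff] using coeff_raisingOp_natDegree_succ φ₀ φ₁ g₀ g₁ n p
  rw [eq_coeff_smul_of_mem_eigenspace_affineDiffOp hg₁ hraise hq hq_monic, hcoeff]

theorem smul_loweringOp_eq_smul (hg₁ : g₁ ≠ 0)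
    (hp : p ∈ eigenspace (affineDiffOp φ₀ φ₁ g₀ g₁) ((n + 1 : ℕ) * g₁)) (hp_monic : p.Monic)
    (hq : q ∈ eigenspace (affineDiffOp φ₀ φ₁ g₀ g₁) (n * g₁)) (hq_monic : q.Monic) :
    g₁ • loweringOp φ₀ φ₁ (n + 1 : ℕ) p =
      ((n + 1) * (φ₁ * g₀ - φ₀ * g₁ + n * φ₁ ^ 2)) • q := by
  have hlower := loweringOp_mem_eigenspace hp
  rw [Nat.cast_succ, add_sub_cancel_right, ← Nat.cast_succ] at hlower
  have hlead := coeff_eq_one_of_mem_eigenspace_affineDiffOp hg₁ hp hp_monic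
  have hsub := mul_coeff_of_mem_eigenspace_affineDiffOp_succ hg₁ hp hp_monic
  rw [eq_coeff_smul_of_mem_eigenspace_affineDiffOp hg₁ hlower hq hq_monic, smul_smul,
    coeff_loweringOp, hlead]
  congr 1
  push_cast
  linear_combination φ₁ * hsub

theorem sq_smul_X_mul_of_mem_eigenspace_affineDiffOp (hg₁ : g₁ ≠ 0)
    (hp : p ∈ eigenspace (affineDiffOp φ₀ φ₁ g₀ g₁) (n * g₁)) (hp_monic : p.Monic)
    (hq : q ∈ eigenspace (affineDiffOp φ₀ φ₁ g₀ g₁) ((n + 1 : ℕ) * g₁)) (hq_monic : q.Monic)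
    (hr : r ∈ eigenspace (affineDiffOp φ₀ φ₁ g₀ g₁) ((n + 2 : ℕ) * g₁)) (hr_monic : r.Monic) :
    g₁ ^ 2 • (X * q) =
      g₁ ^ 2 • r - (g₁ * (g₀ + 2 * (n + 1 : ℕ) * φ₁)) • q +
        ((n + 1) * (φ₁ * g₀ - φ₀ * g₁ + n * φ₁ ^ 2)) • p := by
  have hsum := congrArg (g₁ • ·) (raisingOp_add_loweringOp φ₀ φ₁ g₀ g₁ (n + 1 : ℕ) q)
  simp only [smul_add, raisingOp_eq_smul hg₁ hq hq_monic hr hr_monic,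
    smul_loweringOp_eq_smul hg₁ hq hq_monic hp hp_monic, smul_smul, ← pow_two] at hsum
  rw [sub_add_eq_add_sub, eq_sub_iff_add_eq, hsum]

end Domain

end Ladder

theorem eigenpolynomials_three_term_recurrence_general
    {K : Type*} [Field K] [CharZero K] (f₀ f₁ g₀ g₁ : K) (hg₁ : g₁ ≠ 0)
    (u : ℕ → K[X]) (hmonic : ∀ n, (u n).Monic)
    (hode : ∀ n : ℕ,
      (C g₀ + C g₁ * X) * derivative (u n) +
        ((1 : K) / 2) • ((C f₀ + C f₁ * X) * derivative (derivative (u n))) =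
      ((n : K) * g₁) • u n) :
    ∀ n : ℕ, 1 ≤ n →
      X * u n =
        u (n + 1) - (g₀ / g₁ + (n : K) * f₁ / g₁) • u n +
          ((n : K) * (f₁ * g₀ - f₀ * g₁) / (2 * g₁ ^ 2) +
            (n : K) * ((n : K) - 1) * f₁ ^ 2 / (4 * g₁ ^ 2)) • u (n - 1) := by
  rintro (_ | n) hn
  · contradiction
  have heigen (m : ℕ) :
      u m ∈ Module.End.eigenspace (affineDiffOp (f₀ / 2) (f₁ / 2) g₀ g₁) (m * g₁) := by
    rw [Module.End.mem_eigenspace_iff, ← hode m, affineDiffOp_apply, smul_eq_C_mul,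
      ← mul_assoc, mul_add, ← mul_assoc, ← C_mul, ← C_mul, one_div_mul_eq_div, one_div_mul_eq_div]
  have hcoeff_self : g₁ ^ 2 * (g₀ / g₁ + (n + 1 : ℕ) * f₁ / g₁) =
      g₁ * (g₀ + 2 * (n + 1 : ℕ) * (f₁ / 2)) := by
    field_simp
  have hcoeff_pred : g₁ ^ 2 * ((n + 1 : ℕ) * (f₁ * g₀ - f₀ * g₁) / (2 * g₁ ^ 2) +
      (n + 1 : ℕ) * ((n + 1 : ℕ) - 1) * f₁ ^ 2 / (4 * g₁ ^ 2)) =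
        (n + 1) * (f₁ / 2 * g₀ - f₀ / 2 * g₁ + n * (f₁ / 2) ^ 2) := by
    push_cast
    field_simp
    ring
  apply smul_right_injective K[X] (pow_ne_zero 2 hg₁)
  simp only [smul_add, smul_sub, smul_smul, add_tsub_cancel_right, hcoeff_self, hcoeff_pred]
  exact sq_smul_X_mul_of_mem_eigenspace_affineDiffOp hg₁ (heigen n) (hmonic n)
    (heigen (n + 1)) (hmonic _) (heigen (n + 2)) (hmonic _)

/-- The monic eigenpolynomials of `B = (g₀+g₁t)∂ + ((f₀+f₁t)/2)∂²` with eigenvalue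
`n·g₁` (`g₁ ≠ 0`) satisfy the three-term recurrence
`t·u_n = u_{n+1} − (g₀/g₁ + n f₁/g₁)·u_n
  + (n(f₁g₀ − f₀g₁)/(2g₁²) + n(n−1)f₁²/(4g₁²))·u_{n−1}`
for `n ≥ 1`; in particular `(u_n)` is an orthogonal polynomial sequence. -/
theorem eigenpolynomials_three_term_recurrence
    (f₀ f₁ g₀ g₁ : ℂ) (hg₁ : g₁ ≠ 0)
    (u : ℕ → Polynomial ℂ)
    (hmonic : ∀ n, (u n).Monic) (hdeg : ∀ n, (u n).natDegree = n)
    (hode : ∀ n : ℕ,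
      (C g₀ + C g₁ * X) * derivative (u n) +
        ((1 : ℂ) / 2) • ((C f₀ + C f₁ * X) * derivative (derivative (u n))) =
      ((n : ℂ) * g₁) • u n) :
    ∀ n : ℕ, 1 ≤ n →
      X * u n =
        u (n + 1) - (g₀ / g₁ + (n : ℂ) * f₁ / g₁) • u n +
          ((n : ℂ) * (f₁ * g₀ - f₀ * g₁) / (2 * g₁ ^ 2) +
            (n : ℂ) * ((n : ℂ) - 1) * f₁ ^ 2 / (4 * g₁ ^ 2)) • u (n - 1) :=
  eigenpolynomials_three_term_recurrence_general f₀ f₁ g₀ g₁ hg₁ u hmonic hode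
end

section
/- Let f_0, f_1, g_0, g_1 ∈ ℂ with g_1 ≠ 0, and let (u_n)_{n≥0} be a sequence of monic polynomials in ℂ[t] with deg u_n = n satisfying (g_0 + g_1 t)·u_n′(t) + ((f_0 + f_1 t)/2)·u_n″(t) = n·g_1·u_n(t) for every n ≥ 0. Define the degree-one polynomials w_0(t) = g_0/g_1 + t, w_1(t) = (f_0 g_1 + f_1 g_0)/(2 g_1²) + (f_1/g_1)·t, and w_2(t) = f_0 f_1/(2 g_1²) + (f_1²/(2 g_1²))·t. Then for every n ≥ 0, u_{n+1}(t) = w_0(t)·u_n(t) + w_1(t)·u_n′(t) + (1/2)·w_2(t)·u_n″(t); that is, the monomiality multiplication operator of (u_n) is multiplication by t plus a differential operator of order two with polynomial coefficients of degree one. -/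
open Polynomial

/-!
Put `a = g₀/g₁`, `p = f₀/(2g₁)`, `q = f₁/(2g₁)` and `D = (a + X) + (p + qX)∂`. The differential
operator divided by `g₁` factors as `B = D∂`, and the claimed multiplication operator factors as
`M = D(1 + q∂)`. The relation `[∂, D] = 1 + q∂` gives `[B, M] = M`, so `M` raises the eigenvalue of
an eigenvector of `B` by `1`. As `B` is triangular on monomials with diagonal entries `0, 1, 2, …`,
an eigenvector of eigenvalue `n` is determined by its leading coefficient, which `M` preserves.
-/

section Ladder

theorem mul_raising_eq_raising_mul_add {R A : Type*} [CommSemiring R] [Semiring A] [Algebra R A]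
    {d D : A} {q : R} (h : d * D = D * d + (1 + q • d)) :
    D * d * (D * (1 + q • d)) = D * (1 + q • d) * (D * d) + D * (1 + q • d) := by
  have hQD : (1 + q • d) * D = (D + q • 1) * (1 + q • d) := by
    simp only [add_mul, mul_add, one_mul, mul_one, smul_mul_assoc, mul_smul_comm, h, smul_add]
    abel
  calc D * d * (D * (1 + q • d))
      = D * (d * D) * (1 + q • d) := by simp only [mul_assoc]
    _ = D * ((D + q • 1) * (1 + q • d) * d) + D * (1 + q • d) := by
      rw [h]
      simp only [add_mul, mul_add, one_mul, mul_one, smul_mul_assoc, mul_smul_comm, mul_assoc,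
        smul_add]
      abel
    _ = D * (1 + q • d) * (D * d) + D * (1 + q • d) := by
      rw [← hQD]
      simp only [mul_assoc]

theorem mem_eigenspace_add_of_mul_eq {R V : Type*} [CommRing R] [AddCommGroup V] [Module R V]
    {B M : Module.End R V} {ν : R} (h : B * M = M * B + ν • M) {μ : R} {v : V}
    (hv : v ∈ B.eigenspace μ) : M v ∈ B.eigenspace (μ + ν) := by
  rw [Module.End.mem_eigenspace_iff] at hv ⊢
  calc B (M v) = M (B v) + ν • M v := LinearMap.congr_fun h v
    _ = (μ + ν) • M v := by rw [hv, map_smul, add_smul]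

end Ladder

section Operators

variable {R : Type*} [CommSemiring R] (a p q : R)

/-- The operator `D = (a + X) + (p + qX)∂`, the common left factor of the eigenvalue operator and of
the multiplication operator. -/
noncomputable def ladderFactor : Module.End R R[X] :=
  LinearMap.mulLeft R (C a + X) + LinearMap.mulLeft R (C p + C q * X) * derivative

/-- The operator `(a + X)∂ + (p + qX)∂²` whose eigenpolynomials are studied, normalized so that its
eigenvalues are `0, 1, 2, …` and written as `D∂` with `D` the `ladderFactor`. -/
noncomputable def spectralOperator : Module.End R R[X] :=
  ladderFactor a p q * derivative

/-- The monomiality multiplication operator of the eigenpolynomials of `spectralOperator a p q`,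
written as `D(1 + q∂)` with `D` the `ladderFactor`. -/
noncomputable def raisingOperator : Module.End R R[X] :=
  ladderFactor a p q * (1 + q • derivative)

theorem ladderFactor_apply (v : R[X]) :
    ladderFactor a p q v = (C a + X) * v + (C p + C q * X) * derivative v :=
  rfl

theorem spectralOperator_apply (v : R[X]) :
    spectralOperator a p q v =
      (C a + X) * derivative v + (C p + C q * X) * derivative (derivative v) :=
  rfl

theorem raisingOperator_eq_ladderFactor (v : R[X]) :
    raisingOperator a p q v = ladderFactor a p q (v + q • derivative v) :=
  rfl

theorem raisingOperator_apply (v : R[X]) :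
    raisingOperator a p q v =
      (C a + X) * v + (C (p + q * a) + C (2 * q) * X) * derivative v +
        (C (p * q) + C (q ^ 2) * X) * derivative (derivative v) := by
  simp only [raisingOperator_eq_ladderFactor, ladderFactor_apply, smul_eq_C_mul, derivative_add,
    derivative_C_mul, C_add, C_mul, C_pow, C_ofNat]
  ring

theorem derivative_mul_ladderFactor :
    derivative * ladderFactor a p q = ladderFactor a p q * derivative + (1 + q • derivative) := by
  refine LinearMap.ext fun v => ?_
  change derivative (ladderFactor a p q v) =
    ladderFactor a p q (derivative v) + (v + q • derivative v)
  simp only [ladderFactor_apply, derivative_add, derivative_mul, derivative_C, derivative_X,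
    smul_eq_C_mul]
  ring

theorem spectralOperator_mul_raisingOperator :
    spectralOperator a p q * raisingOperator a p q =
      raisingOperator a p q * spectralOperator a p q + raisingOperator a p q :=
  mul_raising_eq_raising_mul_add (derivative_mul_ladderFactor a p q)

variable {v : R[X]} {k : ℕ}

theorem coeff_succ_ladderFactor_of_natDegree_le (hv : v.natDegree ≤ k) :
    (ladderFactor a p q v).coeff (k + 1) = v.coeff k := by
  have hcoeff : ∀ j, k < j → v.coeff j = 0 := fun j hj =>
    coeff_eq_zero_of_natDegree_lt (hv.trans_lt hj)
  simp [ladderFactor_apply, add_mul, mul_assoc, coeff_X_mul, coeff_derivative, hcoeff]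

theorem coeff_spectralOperator_of_natDegree_le (hv : v.natDegree ≤ k) :
    (spectralOperator a p q v).coeff k = k * v.coeff k := by
  cases k with
  | zero =>
    rw [spectralOperator_apply, derivative_of_natDegree_zero (Nat.le_zero.mp hv)]
    simp
  | succ k =>
    have hderiv : (derivative v).natDegree ≤ k :=
      (natDegree_derivative_le v).trans (Nat.sub_le_of_le_add hv)
    calc (spectralOperator a p q v).coeff (k + 1)
        = (derivative v).coeff k := coeff_succ_ladderFactor_of_natDegree_le a p q hderiv
      _ = (k + 1 : ℕ) * v.coeff (k + 1) := by
        rw [coeff_derivative, Nat.cast_succ, mul_comm]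

theorem coeff_succ_raisingOperator_of_natDegree_le (hv : v.natDegree ≤ k) :
    (raisingOperator a p q v).coeff (k + 1) = v.coeff k := by
  have hsum : (v + q • derivative v).natDegree ≤ k :=
    natDegree_add_le_of_degree_le hv <| (natDegree_smul_le q _).trans <|
      (natDegree_derivative_le v).trans <| (Nat.sub_le _ _).trans hv
  rw [raisingOperator_eq_ladderFactor, coeff_succ_ladderFactor_of_natDegree_le a p q hsum,
    coeff_add, coeff_smul, coeff_derivative,
    coeff_eq_zero_of_natDegree_lt (Nat.lt_succ_of_le hv), zero_mul, smul_zero, add_zero]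

end Operators

section Eigenpolynomials

variable {R : Type*} [CommRing R] [NoZeroDivisors R] [CharZero R] {a p q : R} {u v : R[X]} {n : ℕ}

theorem natDegree_eq_of_mem_eigenspace_spectralOperator
    (hv : v ∈ (spectralOperator a p q).eigenspace (n : R)) (hv₀ : v ≠ 0) : v.natDegree = n := by
  have hlead : (v.natDegree : R) * v.leadingCoeff = n * v.leadingCoeff :=
    calc (v.natDegree : R) * v.leadingCoeff
        = (spectralOperator a p q v).coeff v.natDegree :=
          (coeff_spectralOperator_of_natDegree_le a p q le_rfl).symm
      _ = n * v.leadingCoeff := by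
        rw [Module.End.mem_eigenspace_iff.mp hv, coeff_smul, smul_eq_mul, coeff_natDegree]
  exact Nat.cast_injective (mul_right_cancel₀ (leadingCoeff_ne_zero.mpr hv₀) hlead)

theorem eq_of_mem_eigenspace_spectralOperator
    (hu : u ∈ (spectralOperator a p q).eigenspace (n : R))
    (hv : v ∈ (spectralOperator a p q).eigenspace (n : R)) (huv : u.coeff n = v.coeff n) :
    u = v := by
  by_contra hne
  have hsub : u - v ≠ 0 := sub_ne_zero.mpr hne
  have hdeg : (u - v).natDegree = n :=
    natDegree_eq_of_mem_eigenspace_spectralOperator (sub_mem hu hv) hsub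
  refine leadingCoeff_ne_zero.mpr hsub ?_
  rw [leadingCoeff, hdeg, coeff_sub, huv, sub_self]

theorem eq_raisingOperator_of_leadingCoeff_eq
    (hu : u ∈ (spectralOperator a p q).eigenspace (n : R))
    (hv : v ∈ (spectralOperator a p q).eigenspace ((n + 1 : ℕ) : R))
    (hu₀ : u ≠ 0) (hlead : v.leadingCoeff = u.leadingCoeff) : v = raisingOperator a p q u := by
  have hv₀ : v ≠ 0 := by rwa [← leadingCoeff_ne_zero, hlead, leadingCoeff_ne_zero]
  have hdegu := natDegree_eq_of_mem_eigenspace_spectralOperator hu hu₀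
  have hdegv := natDegree_eq_of_mem_eigenspace_spectralOperator hv hv₀
  have hraise : raisingOperator a p q u ∈
      (spectralOperator a p q).eigenspace ((n + 1 : ℕ) : R) := by
    rw [Nat.cast_succ]
    exact mem_eigenspace_add_of_mul_eq
      (by rw [one_smul, spectralOperator_mul_raisingOperator]) hu
  refine eq_of_mem_eigenspace_spectralOperator hv hraise ?_
  rw [coeff_succ_raisingOperator_of_natDegree_le a p q hdegu.le]
  simpa only [leadingCoeff, hdegu, hdegv] using hlead

end Eigenpolynomials

section Normalization

variable {K : Type*} [Field K] [NeZero (2 : K)] (f₀ f₁ g₀ : K) {g₁ : K}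

theorem smul_spectralOperator_apply (hg₁ : g₁ ≠ 0) (v : K[X]) :
    g₁ • spectralOperator (g₀ / g₁) (f₀ / (2 * g₁)) (f₁ / (2 * g₁)) v =
      (C g₀ + C g₁ * X) * derivative v +
        ((1 : K) / 2) • ((C f₀ + C f₁ * X) * derivative (derivative v)) := by
  have hg : C g₀ = C g₁ * C (g₀ / g₁) := by rw [← C_mul, mul_div_cancel₀ _ hg₁]
  have hf (f : K) : C g₁ * C (f / (2 * g₁)) = C (1 / 2) * C f := by
    rw [← C_mul, ← C_mul]
    congr 1
    field_simp
  rw [spectralOperator_apply, smul_eq_C_mul, smul_eq_C_mul, hg]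
  linear_combination derivative (derivative v) * (hf f₀ + X * hf f₁)

theorem raisingOperator_div_apply (hg₁ : g₁ ≠ 0) (v : K[X]) :
    raisingOperator (g₀ / g₁) (f₀ / (2 * g₁)) (f₁ / (2 * g₁)) v =
      (C (g₀ / g₁) + X) * v +
        (C ((f₀ * g₁ + f₁ * g₀) / (2 * g₁ ^ 2)) + C (f₁ / g₁) * X) * derivative v +
        ((1 : K) / 2) •
          ((C (f₀ * f₁ / (2 * g₁ ^ 2)) + C (f₁ ^ 2 / (2 * g₁ ^ 2)) * X) *
            derivative (derivative v)) := by
  have hw₁₀ : f₀ / (2 * g₁) + f₁ / (2 * g₁) * (g₀ / g₁) =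
      (f₀ * g₁ + f₁ * g₀) / (2 * g₁ ^ 2) := by field_simp
  have hw₁₁ : 2 * (f₁ / (2 * g₁)) = f₁ / g₁ := by field_simp
  have hw₂₀ : f₀ / (2 * g₁) * (f₁ / (2 * g₁)) = 1 / 2 * (f₀ * f₁ / (2 * g₁ ^ 2)) := by ring
  have hw₂₁ : (f₁ / (2 * g₁)) ^ 2 = 1 / 2 * (f₁ ^ 2 / (2 * g₁ ^ 2)) := by ring
  rw [raisingOperator_apply, hw₁₀, hw₁₁, hw₂₀, hw₂₁, smul_eq_C_mul, C_mul, C_mul]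
  ring

end Normalization

theorem eigenpolynomials_multiplication_operator_general {K : Type*} [Field K] [CharZero K]
    (f₀ f₁ g₀ g₁ : K) (hg₁ : g₁ ≠ 0)
    (u : ℕ → K[X])
    (hmonic : ∀ n, (u n).Monic)
    (hode : ∀ n : ℕ,
      (C g₀ + C g₁ * X) * derivative (u n) +
        ((1 : K) / 2) • ((C f₀ + C f₁ * X) * derivative (derivative (u n))) =
      ((n : K) * g₁) • u n) :
    ∀ n : ℕ,
      u (n + 1) =
        (C (g₀ / g₁) + X) * u n +
          (C ((f₀ * g₁ + f₁ * g₀) / (2 * g₁ ^ 2)) + C (f₁ / g₁) * X) * derivative (u n) +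
          ((1 : K) / 2) •
            ((C (f₀ * f₁ / (2 * g₁ ^ 2)) + C (f₁ ^ 2 / (2 * g₁ ^ 2)) * X) *
              derivative (derivative (u n))) := by
  have heigen (n : ℕ) :
      u n ∈ (spectralOperator (g₀ / g₁) (f₀ / (2 * g₁)) (f₁ / (2 * g₁))).eigenspace (n : K) := by
    rw [Module.End.mem_eigenspace_iff, ← smul_right_inj hg₁,
      smul_spectralOperator_apply f₀ f₁ g₀ hg₁, hode, smul_smul, mul_comm]
  intro n
  rw [← raisingOperator_div_apply f₀ f₁ g₀ hg₁]
  exact eq_raisingOperator_of_leadingCoeff_eq (heigen n) (heigen (n + 1)) (hmonic n).ne_zero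
    ((hmonic (n + 1)).trans (hmonic n).symm)

/-- The monomiality multiplication operator of the monic eigenpolynomials of
`B = (g₀+g₁t)∂ + ((f₀+f₁t)/2)∂²` (eigenvalue `n·g₁`, `g₁ ≠ 0`) is multiplication by `t`
plus a second-order differential operator with degree-one polynomial coefficients:
`u_{n+1} = w₀·u_n + w₁·u_n′ + (1/2)·w₂·u_n″`, where `w₀(t) = g₀/g₁ + t`,
`w₁(t) = (f₀g₁+f₁g₀)/(2g₁²) + (f₁/g₁)t`, `w₂(t) = f₀f₁/(2g₁²) + (f₁²/(2g₁²))t`. -/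
theorem eigenpolynomials_multiplication_operator
    (f₀ f₁ g₀ g₁ : ℂ) (hg₁ : g₁ ≠ 0)
    (u : ℕ → Polynomial ℂ)
    (hmonic : ∀ n, (u n).Monic) (hdeg : ∀ n, (u n).natDegree = n)
    (hode : ∀ n : ℕ,
      (C g₀ + C g₁ * X) * derivative (u n) +
        ((1 : ℂ) / 2) • ((C f₀ + C f₁ * X) * derivative (derivative (u n))) =
      ((n : ℂ) * g₁) • u n) :
    ∀ n : ℕ,
      u (n + 1) =
        (C (g₀ / g₁) + X) * u n +
          (C ((f₀ * g₁ + f₁ * g₀) / (2 * g₁ ^ 2)) + C (f₁ / g₁) * X) * derivative (u n) +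
          ((1 : ℂ) / 2) •
            ((C (f₀ * f₁ / (2 * g₁ ^ 2)) + C (f₁ ^ 2 / (2 * g₁ ^ 2)) * X) *
              derivative (derivative (u n))) :=
  eigenpolynomials_multiplication_operator_general f₀ f₁ g₀ g₁ hg₁ u hmonic hode
end
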